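/- arXiv:2507.13700 — 5 statements merged into one kernel-verified Lean document; each statement's English description precedes it below -/
import Mathlib

section
/- Let r > 0 be a real number and let ν be a probability measure on ℝ with finite first moment and mean 0. Consider the joint law in which p is uniform on [0,1]; conditionally on p, two bits b and b' are independent Bernoulli(p) random variables; and η is drawn from ν independently of (p, b, b'). Set a = b/r + η. Then E[(a − p/r)·(b − p)] = 1/(6r) and E[(a − p/r)·(b' − p)] = 0. -/
/-!
Conditionally on `p`, each of the four values of the pair of bits `(b, b')` is an atom, so the joint
law splits as a sum over `(b, b')` of product measures on `(p, η)`, the `p`-factor being uniform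
measure weighted by `Pr[b, b' | p]` (`jointLaw_eq_sum`).  On each piece the score
`(b/r + η - p/r)(e - p)`, with `e` the value of one of the two bits, is the polynomial
`(b - p)(e - p)/r` plus `(e - p) η`; the second term is integrable because `η` is, and integrates
to `0` because `η` is centred and independent of `p`.  Summing over the bits
(`integral_score`) gives `E[(b - p)(e - p) | p] / r`, which is the Bernoulli variance
`p(1 - p)/r` when `e = b`, with integral `1/(6r)` over `[0,1]`, and is the covariance `0` of two
independent bits when `e = b'`.
-/


open MeasureTheory

/-- The Bernoulli measure on `Bool` with parameter `p`: mass `p` on `true` and `1 − p` on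
`false` (a probability measure whenever `p ∈ [0,1]`). -/
noncomputable def bern (p : ℝ) : Measure Bool :=
  ENNReal.ofReal p • Measure.dirac true + ENNReal.ofReal (1 - p) • Measure.dirac false

/-- The joint law on `(p, b, b', η)`: `p` is uniform on `[0,1]`; conditionally on `p`, the
bits `b` and `b'` are independent `Bernoulli(p)`; and `η ∼ ν` independently of `(p, b, b')`. -/
noncomputable def jointLaw (ν : Measure ℝ) : Measure (ℝ × Bool × Bool × ℝ) :=
  (volume.restrict (Set.Icc (0 : ℝ) 1)).bind fun p =>
    Measure.map (fun x : Bool × Bool × ℝ => (p, x)) ((bern p).prod ((bern p).prod ν))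

/-- The real value of a bit. -/
noncomputable def bval (b : Bool) : ℝ := if b then 1 else 0

/-- The probability `p` or `1 - p` that `bern p` gives to `b`, with negative values cut off at `0`
as in `bern`. -/
noncomputable def bernMass (b : Bool) (p : ℝ) : NNReal :=
  if b then p.toNNReal else (1 - p).toNNReal

lemma measurable_bernMass (b : Bool) : Measurable (bernMass b) := by
  unfold bernMass
  cases b <;> simp <;> fun_prop

/-- The weight `Pr[b, b' | p]` of a pair of bits. -/
noncomputable def pairMass (x : Bool × Bool) (p : ℝ) : NNReal :=
  bernMass x.1 p * bernMass x.2 p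

lemma measurable_pairMass (x : Bool × Bool) : Measurable (pairMass x) :=
  (measurable_bernMass x.1).mul (measurable_bernMass x.2)

lemma lintegral_bern (p : ℝ) (f : Bool → ENNReal) :
    ∫⁻ b, f b ∂bern p = ∑ b, (bernMass b p : ENNReal) * f b := by
  simp [bern, bernMass, ENNReal.ofReal]
  rfl

instance isFiniteMeasure_bern (p : ℝ) : IsFiniteMeasure (bern p) := by
  constructor
  simp [bern, ENNReal.ofReal_lt_top]

/-- The conditional law of `(p, b, b', η)` given `p`, as a sum over the values of the bits. -/
lemma condLaw_apply (ν : Measure ℝ) [IsProbabilityMeasure ν] (p : ℝ)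
    {s : Set (ℝ × Bool × Bool × ℝ)} (hs : MeasurableSet s) :
    Measure.map (fun x : Bool × Bool × ℝ => (p, x)) ((bern p).prod ((bern p).prod ν)) s
      = ∑ x : Bool × Bool, (pairMass x p : ENNReal) *
          ν (Prod.mk p ⁻¹' ((fun q : ℝ × ℝ => (q.1, x.1, x.2, q.2)) ⁻¹' s)) := by
  have h1 : MeasurableSet ((fun x : Bool × Bool × ℝ => (p, x)) ⁻¹' s) :=
    measurable_prodMk_left hs
  rw [Measure.map_apply measurable_prodMk_left hs, Measure.prod_apply h1, lintegral_bern,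
    Fintype.sum_prod_type]
  refine Finset.sum_congr rfl fun b _ => ?_
  rw [Measure.prod_apply (measurable_prodMk_left h1), lintegral_bern, Finset.mul_sum]
  refine Finset.sum_congr rfl fun b' _ => ?_
  simp only [pairMass, ENNReal.coe_mul, mul_assoc, Set.preimage_preimage]

lemma measurable_slice (ν : Measure ℝ) [IsProbabilityMeasure ν] (x : Bool × Bool)
    {s : Set (ℝ × Bool × Bool × ℝ)} (hs : MeasurableSet s) :
    Measurable fun p : ℝ =>
      ν (Prod.mk p ⁻¹' ((fun q : ℝ × ℝ => (q.1, x.1, x.2, q.2)) ⁻¹' s)) :=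
  measurable_measure_prodMk_left
    ((show Measurable fun q : ℝ × ℝ => (q.1, x.1, x.2, q.2) by fun_prop) hs)

/-- The measurability in `p` needed for `Measure.bind` in `jointLaw` not to take a junk value. -/
lemma measurable_condLaw (ν : Measure ℝ) [IsProbabilityMeasure ν] :
    Measurable fun p : ℝ =>
      Measure.map (fun x : Bool × Bool × ℝ => (p, x)) ((bern p).prod ((bern p).prod ν)) := by
  refine Measure.measurable_of_measurable_coe _ fun s hs => ?_
  simp_rw [condLaw_apply ν _ hs]
  exact Finset.measurable_fun_sum _ fun x _ =>
    (measurable_pairMass x).coe_nnreal_ennreal.mul (measurable_slice ν x hs)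

/-- Uniform measure on `[0,1]` weighted by the conditional probability of the pair `x` of bits. -/
noncomputable def pairLaw (x : Bool × Bool) : Measure ℝ :=
  (volume.restrict (Set.Icc (0 : ℝ) 1)).withDensity fun p => (pairMass x p : ENNReal)

lemma jointLaw_eq_sum (ν : Measure ℝ) [IsProbabilityMeasure ν] :
    jointLaw ν = ∑ x : Bool × Bool,
      ((pairLaw x).prod ν).map fun q : ℝ × ℝ => (q.1, x.1, x.2, q.2) := by
  ext s hs
  rw [jointLaw, Measure.bind_apply hs (measurable_condLaw ν).aemeasurable]
  simp_rw [condLaw_apply ν _ hs]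
  rw [lintegral_finsetSum _ fun x _ => Measurable.fun_mul
    (measurable_pairMass x).coe_nnreal_ennreal (measurable_slice ν x hs),
    Measure.finsetSum_apply]
  refine Finset.sum_congr rfl fun x _ => ?_
  have hm : Measurable fun q : ℝ × ℝ => (q.1, x.1, x.2, q.2) := by fun_prop
  rw [Measure.map_apply hm hs, Measure.prod_apply (hm hs), pairLaw,
    lintegral_withDensity_eq_lintegral_mul _ (measurable_pairMass x).coe_nnreal_ennreal
      (measurable_slice ν x hs)]
  rfl

lemma coe_bernMass {b : Bool} {p : ℝ} (hp : p ∈ Set.Icc (0 : ℝ) 1) :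
    (bernMass b p : ℝ) = if b then p else 1 - p := by
  cases b <;> simp [bernMass, hp.1, hp.2]

lemma coe_pairMass {x : Bool × Bool} {p : ℝ} (hp : p ∈ Set.Icc (0 : ℝ) 1) :
    (pairMass x p : ℝ) = (if x.1 then p else 1 - p) * (if x.2 then p else 1 - p) := by
  rw [pairMass, NNReal.coe_mul, coe_bernMass hp, coe_bernMass hp]

lemma integrable_pairLaw (x : Bool × Bool) {f : ℝ → ℝ} (hf : Continuous f) :
    Integrable f (pairLaw x) := by
  rw [pairLaw, integrable_withDensity_iff_integrable_smul (measurable_pairMass x)]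
  have h : IntegrableOn (fun p : ℝ => ((if x.1 then p else 1 - p) * (if x.2 then p else 1 - p))
      * f p) (Set.Icc 0 1) := by
    refine Continuous.integrableOn_Icc ?_
    rcases x with ⟨_ | _, _ | _⟩ <;> simp <;> fun_prop
  refine h.congr_fun (fun p hp => ?_) measurableSet_Icc
  simp only [NNReal.smul_def, coe_pairMass hp, smul_eq_mul]

lemma integral_pairLaw (x : Bool × Bool) (f : ℝ → ℝ) :
    ∫ p, f p ∂pairLaw x = ∫ p in (0 : ℝ)..1,
      ((if x.1 then p else 1 - p) * (if x.2 then p else 1 - p)) * f p := by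
  rw [pairLaw, integral_withDensity_eq_integral_smul (measurable_pairMass x),
    intervalIntegral.integral_of_le zero_le_one, ← integral_Icc_eq_integral_Ioc]
  refine setIntegral_congr_fun measurableSet_Icc fun p hp => ?_
  simp only [NNReal.smul_def, coe_pairMass hp, smul_eq_mul]

instance isFiniteMeasure_pairLaw (x : Bool × Bool) : IsFiniteMeasure (pairLaw x) :=
  (integrable_const_iff_isFiniteMeasure (one_ne_zero (α := ℝ))).1
    (integrable_pairLaw x continuous_const)

/-- The expected score, where `e` selects one of the two bits: the noise averages out, leaving the
conditional expectation of `(b - p)(e - p) / r` written as a sum over the four bit pairs. -/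
lemma integral_score (r : ℝ) (ν : Measure ℝ) [IsProbabilityMeasure ν]
    (hint : Integrable (fun x : ℝ => x) ν) (hmean : ∫ x, x ∂ν = 0) (e : Bool × Bool → Bool) :
    ∫ ω : ℝ × Bool × Bool × ℝ, ((bval ω.2.1 / r + ω.2.2.2) - ω.1 / r)
        * (bval (e (ω.2.1, ω.2.2.1)) - ω.1) ∂jointLaw ν
      = ∫ p in (0 : ℝ)..1, ∑ x : Bool × Bool,
          ((if x.1 then p else 1 - p) * (if x.2 then p else 1 - p))
            * ((bval x.1 - p) * (bval (e x) - p) / r) := by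
  have hpoly (x : Bool × Bool) :
      Integrable (fun p : ℝ => (bval x.1 - p) * (bval (e x) - p) / r) (pairLaw x) :=
    integrable_pairLaw x (by fun_prop)
  have hnoise (x : Bool × Bool) :
      Integrable (fun q : ℝ × ℝ => (bval (e x) - q.1) * q.2) ((pairLaw x).prod ν) :=
    (integrable_pairLaw x (f := fun p => bval (e x) - p) (by fun_prop)).mul_prod hint
  have hsplit (x : Bool × Bool) (q : ℝ × ℝ) :
      ((bval x.1 / r + q.2) - q.1 / r) * (bval (e x) - q.1)
        = (bval x.1 - q.1) * (bval (e x) - q.1) / r + (bval (e x) - q.1) * q.2 := by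
    ring
  have hemb (x : Bool × Bool) : Measurable fun q : ℝ × ℝ => (q.1, x.1, x.2, q.2) := by fun_prop
  have hbval : Measurable bval := measurable_of_finite _
  have he : Measurable e := measurable_of_finite _
  have hmeas : Measurable fun ω : ℝ × Bool × Bool × ℝ => ((bval ω.2.1 / r + ω.2.2.2) - ω.1 / r)
      * (bval (e (ω.2.1, ω.2.2.1)) - ω.1) := by fun_prop
  rw [jointLaw_eq_sum, integral_finsetSum_measure, intervalIntegral.integral_finsetSum]
  · refine Finset.sum_congr rfl fun x _ => ?_
    rw [integral_map (hemb x).aemeasurable hmeas.aestronglyMeasurable]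
    simp only [Prod.mk.eta, hsplit]
    rw [integral_add ((hpoly x).comp_fst ν) (hnoise x),
      integral_prod_mul (fun p => bval (e x) - p) fun y => y, hmean, mul_zero, add_zero,
      integral_fun_fst fun p => (bval x.1 - p) * (bval (e x) - p) / r, probReal_univ, one_smul,
      integral_pairLaw]
  · intro x _
    refine Continuous.intervalIntegrable ?_ _ _
    rcases x with ⟨_ | _, _ | _⟩ <;> simp <;> fun_prop
  · intro x _
    rw [integrable_map_measure hmeas.aestronglyMeasurable (hemb x).aemeasurable]
    simp only [Function.comp_def, Prod.mk.eta, hsplit]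
    exact ((hpoly x).comp_fst ν).add (hnoise x)

/-- let `r > 0` and let `ν` be a probability measure on `ℝ` with finite first
moment and mean `0`.  Under the joint law in which `p ∼ Unif[0,1]`, `b, b'` are conditionally
independent `Bernoulli(p)` bits, `η ∼ ν` is independent noise, and `a = b/r + η` is the noise
addition mechanism's answer, the score increment of Algorithm 1 satisfies
`E[(a − p/r)·(b − p)] = 1/(6r)` (element present in the sample) and
`E[(a − p/r)·(b' − p)] = 0` (element absent from the sample). -/
theorem stmt_2 (r : ℝ) (hr : 0 < r) (ν : Measure ℝ) [IsProbabilityMeasure ν]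
    (hint : Integrable (fun x : ℝ => x) ν) (hmean : ∫ x, x ∂ν = 0) :
    (∫ ω : ℝ × Bool × Bool × ℝ,
        ((bval ω.2.1 / r + ω.2.2.2) - ω.1 / r) * (bval ω.2.1 - ω.1) ∂jointLaw ν)
      = 1 / (6 * r)
    ∧ (∫ ω : ℝ × Bool × Bool × ℝ,
        ((bval ω.2.1 / r + ω.2.2.2) - ω.1 / r) * (bval ω.2.2.1 - ω.1) ∂jointLaw ν)
      = 0 := by
  constructor
  · rw [integral_score r ν hint hmean Prod.fst]
    -- the variance of a Bernoulli bit
    have h (p : ℝ) : ∑ x : Bool × Bool, ((if x.1 then p else 1 - p) * (if x.2 then p else 1 - p))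
        * ((bval x.1 - p) * (bval x.1 - p) / r) = (p - p ^ 2) / r := by
      simp [Fintype.sum_prod_type, bval]
      ring
    simp only [h]
    rw [intervalIntegral.integral_div, intervalIntegral.integral_sub
      (by simp) (by simp), integral_id, integral_pow]
    field_simp
    norm_num
  · rw [integral_score r ν hint hmean Prod.snd]
    -- the covariance of two independent bits
    have h (p : ℝ) : ∑ x : Bool × Bool, ((if x.1 then p else 1 - p) * (if x.2 then p else 1 - p))
        * ((bval x.1 - p) * (bval x.2 - p) / r) = 0 := by
      simp [Fintype.sum_prod_type, bval]
      ring
    simp only [h, intervalIntegral.integral_zero]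
end

section
/- Let b > 0, ε ≥ 0, and μ₁, μ₂ ∈ ℝ with |μ₁ − μ₂| ≤ ε. Then the Kullback–Leibler divergences between the two Laplace measures satisfy D(Lap(μ₁,b) ‖ Lap(μ₂,b)) ≤ (ε/b)·(e^{ε/b} − 1) and D(Lap(μ₂,b) ‖ Lap(μ₁,b)) ≤ (ε/b)·(e^{ε/b} − 1). -/
/-!
Write `L x = (|x - μ₂| - |x - μ₁|) / b` for the log-likelihood ratio, so that
`Lap(μ₁,b) = e^L · Lap(μ₂,b)`. By the triangle inequality `|L| ≤ a := ε / b`.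
With `P = Lap(μ₁,b)` and `Q = Lap(μ₂,b)`, the divergence `D(P‖Q)` is at most the symmetrised
divergence `D(P‖Q) + D(Q‖P) = ∫ (1 - e^{-L}) L dP`, whose integrand is at most `a (e^a - 1)`.
The proof below uses a pointwise version of this, `L ≤ a (e^a - 1) + 1 - e^{-L}`
(`le_add_one_sub_exp_neg`), and integrates it against `P`, where `∫ e^{-L} dP = Q(ℝ) = 1`.
The change of density is `lap_eq_withDensity`, the normalisation `isProbabilityMeasure_lap`.
-/

open MeasureTheory

/-- The Laplace probability measure on `ℝ` with location `μ` and scale `b`, i.e. the measure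
with density `x ↦ (1/(2b))·exp(−|x−μ|/b)` with respect to Lebesgue measure. -/
noncomputable def lap (μ b : ℝ) : Measure ℝ :=
  volume.withDensity fun x => ENNReal.ofReal ((1 / (2 * b)) * Real.exp (-|x - μ| / b))

/-- The Kullback–Leibler divergence `D(μ‖ν) = ∫ ln(dμ/dν) dμ`. -/
noncomputable def klDiv {α : Type*} [MeasurableSpace α] (μ ν : Measure α) : ℝ :=
  ∫ x, Real.log ((μ.rnDeriv ν x).toReal) ∂μ

lemma isProbabilityMeasure_lap (μ : ℝ) {b : ℝ} (hb : 0 < b) : IsProbabilityMeasure (lap μ b) := by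
  have h1 : ∫ x : ℝ, (1 / (2 * b)) * Real.exp (-|x - μ| / b) = 1 := by
    rw [integral_sub_right_eq_self (fun x : ℝ => (1 / (2 * b)) * Real.exp (-|x| / b)) μ,
      integral_comp_abs (f := fun x : ℝ => (1 / (2 * b)) * Real.exp (-x / b)),
      integral_const_mul]
    have h2 : ∫ x in Set.Ioi (0 : ℝ), Real.exp (-x / b) = b := by
      have h3 := integral_exp_mul_Ioi (a := -b⁻¹) (by simpa using hb) 0
      simp only [mul_zero, Real.exp_zero] at h3
      calc ∫ x in Set.Ioi (0 : ℝ), Real.exp (-x / b)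
          = ∫ x in Set.Ioi (0 : ℝ), Real.exp (-b⁻¹ * x) := by
            congr 1; ext x; congr 1; ring
        _ = b := by rw [h3]; field_simp
    rw [h2]; field_simp
  -- The Bochner integral is nonzero, so it is not a junk value.
  have hint : Integrable (fun x : ℝ => (1 / (2 * b)) * Real.exp (-|x - μ| / b)) := by
    by_contra h
    rw [integral_undef h] at h1
    exact zero_ne_one h1
  constructor
  rw [lap, withDensity_apply _ MeasurableSet.univ, Measure.restrict_univ,
    ← ofReal_integral_eq_lintegral_ofReal hint (Filter.Eventually.of_forall fun x => by positivity),
    h1, ENNReal.ofReal_one]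

lemma lap_eq_withDensity (μ₁ μ₂ : ℝ) {b : ℝ} (hb : 0 < b) :
    lap μ₁ b = (lap μ₂ b).withDensity
      fun x => ENNReal.ofReal (Real.exp ((|x - μ₂| - |x - μ₁|) / b)) := by
  unfold lap
  rw [← withDensity_mul _ (by fun_prop) (by fun_prop)]
  congr 1
  ext x
  rw [Pi.mul_apply, ← ENNReal.ofReal_mul (by positivity), mul_assoc, ← Real.exp_add]
  congr 4
  ring

/-- Pointwise form of the bound of the divergence by its symmetrisation: it combines
`(1 - e^{-t}) t ≤ a (e^a - 1)` with `t e^{-t} ≤ 1 - e^{-t}`. -/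
lemma le_add_one_sub_exp_neg {a t : ℝ} (ht : |t| ≤ a) :
    t ≤ a * (Real.exp a - 1) + (1 - Real.exp (-t)) := by
  have ha : 0 ≤ a := (abs_nonneg t).trans ht
  obtain ⟨h1, h2⟩ := abs_le.mp ht
  have hsum : t * Real.exp (-t) ≤ 1 - Real.exp (-t) := by
    have h := mul_le_mul_of_nonneg_right (Real.add_one_le_exp t) (Real.exp_pos (-t)).le
    rw [← Real.exp_add, add_neg_cancel, Real.exp_zero] at h
    linarith
  have hprod : (1 - Real.exp (-t)) * t ≤ a * (Real.exp a - 1) := by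
    have habs : |1 - Real.exp (-t)| ≤ Real.exp a - 1 := by
      have h3 : Real.exp (-t) ≤ Real.exp a := Real.exp_le_exp.mpr (by linarith)
      have h4 := Real.add_one_le_exp (-t)
      have h5 := Real.add_one_le_exp a
      rw [abs_le]
      constructor <;> linarith
    calc (1 - Real.exp (-t)) * t ≤ |(1 - Real.exp (-t)) * t| := le_abs_self _
      _ = |t| * |1 - Real.exp (-t)| := by rw [abs_mul, mul_comm]
      _ ≤ a * (Real.exp a - 1) := mul_le_mul ht habs (abs_nonneg _) ha
  linarith

lemma klDiv_lap_le {b ε μ₁ μ₂ : ℝ} (hb : 0 < b) (hμ : |μ₁ - μ₂| ≤ ε) :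
    klDiv (lap μ₁ b) (lap μ₂ b) ≤ (ε / b) * (Real.exp (ε / b) - 1) := by
  have := isProbabilityMeasure_lap μ₁ hb
  have := isProbabilityMeasure_lap μ₂ hb
  set L : ℝ → ℝ := fun x => (|x - μ₂| - |x - μ₁|) / b with hL
  have hLm : Measurable L := by fun_prop
  have hLb (x : ℝ) : |L x| ≤ ε / b := by
    rw [hL, abs_div, abs_of_pos hb]
    gcongr
    refine (abs_abs_sub_abs_le_abs_sub _ _).trans ?_
    rwa [sub_sub_sub_cancel_left]
  have hac : lap μ₁ b ≪ lap μ₂ b := by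
    rw [lap_eq_withDensity μ₁ μ₂ hb]
    exact withDensity_absolutelyContinuous _ _
  have hrn : (lap μ₁ b).rnDeriv (lap μ₂ b) =ᵐ[lap μ₂ b]
      fun x => ENNReal.ofReal (Real.exp (L x)) := by
    rw [lap_eq_withDensity μ₁ μ₂ hb]
    exact Measure.rnDeriv_withDensity _ (by fun_prop)
  have hkl : klDiv (lap μ₁ b) (lap μ₂ b) = ∫ x, L x ∂(lap μ₁ b) := by
    refine integral_congr_ae ?_
    filter_upwards [hac.ae_le hrn] with x hx
    rw [hx, ENNReal.toReal_ofReal (Real.exp_pos _).le, Real.log_exp]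
  have hLi : Integrable L (lap μ₁ b) :=
    Integrable.of_bound hLm.aestronglyMeasurable (ε / b) (Filter.Eventually.of_forall hLb)
  have hEi : Integrable (fun x => Real.exp (-L x)) (lap μ₁ b) := by
    refine Integrable.of_bound (by fun_prop) (Real.exp (ε / b))
      (Filter.Eventually.of_forall fun x => ?_)
    rw [Real.norm_eq_abs, Real.abs_exp]
    exact Real.exp_le_exp.mpr ((neg_le_abs _).trans (hLb x))
  have hE : ∫ x, Real.exp (-L x) ∂(lap μ₁ b) = 1 := by
    -- `e^{-L}` is the density of `Lap(μ₂,b)` with respect to `Lap(μ₁,b)`.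
    have hneg (x : ℝ) : -L x = (|x - μ₁| - |x - μ₂|) / b := by simp only [hL]; ring
    have h1 : lap μ₂ b Set.univ = 1 := measure_univ
    rw [lap_eq_withDensity μ₂ μ₁ hb, withDensity_apply _ MeasurableSet.univ,
      Measure.restrict_univ] at h1
    rw [integral_eq_lintegral_of_nonneg_ae
      (Filter.Eventually.of_forall fun x => (Real.exp_pos _).le) hEi.aestronglyMeasurable]
    simp only [hneg, h1, ENNReal.toReal_one]
  have hSi : Integrable (fun x => 1 - Real.exp (-L x)) (lap μ₁ b) :=
    (integrable_const _).sub hEi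
  rw [hkl]
  calc ∫ x, L x ∂(lap μ₁ b)
      ≤ ∫ x, ((ε / b) * (Real.exp (ε / b) - 1) + (1 - Real.exp (-L x))) ∂(lap μ₁ b) :=
        integral_mono hLi ((integrable_const _).add hSi)
          fun x => le_add_one_sub_exp_neg (hLb x)
    _ = (ε / b) * (Real.exp (ε / b) - 1) := by
        rw [integral_add (integrable_const _) hSi,
          integral_sub (integrable_const _) hEi, hE]
        simp

/-- Lemma B.1: for `b > 0`, `ε ≥ 0` and means `μ₁, μ₂` with `|μ₁ − μ₂| ≤ ε`,
the KL divergences between the Laplace measures `Lap(μ₁,b)` and `Lap(μ₂,b)`, in both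
directions, are at most `(ε/b)·(e^{ε/b} − 1)`. -/
theorem stmt_6 (b ε μ₁ μ₂ : ℝ) (hb : 0 < b) (hε : 0 ≤ ε) (hμ : |μ₁ - μ₂| ≤ ε) :
    klDiv (lap μ₁ b) (lap μ₂ b) ≤ (ε / b) * (Real.exp (ε / b) - 1)
    ∧ klDiv (lap μ₂ b) (lap μ₁ b) ≤ (ε / b) * (Real.exp (ε / b) - 1) := by
  exact ⟨klDiv_lap_le hb hμ, klDiv_lap_le hb (by rwa [abs_sub_comm])⟩
end

section
/- Let μ and ν be probability measures on a common measurable space and let ε ≥ 0. Suppose that for every measurable set S, μ(S) ≤ e^{ε}·ν(S) and ν(S) ≤ e^{ε}·μ(S). Then the Kullback–Leibler divergence satisfies D(μ‖ν) ≤ ε·(e^{ε} − 1). -/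
/-!
Write `f = dμ/dν`. The two hypotheses say that `e^{-ε} ≤ f ≤ e^ε` holds `ν`-almost everywhere, hence
`(f - 1) * log f = |f - 1| * |log f| ≤ ε * (e^ε - 1)`. Adding `log f ≤ f - 1` gives the pointwise
bound `f * log f ≤ (f - 1) + ε * (e^ε - 1)` (`mul_log_le_of_bounds`). Since `∫ f dν = 1`, integrating
it against `ν` bounds `∫ f * log f dν = D(μ‖ν)` by `ε * (e^ε - 1)`.
-/

open MeasureTheory

lemma mul_log_le_of_bounds {ε t : ℝ} (hu : t ≤ Real.exp ε) (hl : 1 ≤ Real.exp ε * t) :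
    t * Real.log t ≤ (t - 1) + ε * (Real.exp ε - 1) := by
  have he := Real.exp_pos ε
  have ht : 0 < t := by
    by_contra! h
    nlinarith
  have hlog_le : Real.log t ≤ ε := (Real.log_le_iff_le_exp ht).2 hu
  have hlog_ge : -ε ≤ Real.log t := by
    have h := Real.log_nonneg hl
    rw [Real.log_mul he.ne' ht.ne', Real.log_exp] at h
    linarith
  have hlin : Real.log t ≤ t - 1 := Real.log_le_sub_one_of_pos ht
  have hε : 0 ≤ ε := by linarith
  have hE : 1 ≤ Real.exp ε := Real.one_le_exp hε
  -- `1 - t ≤ 1 - e^{-ε} ≤ e^ε - 1`, the last step being `(e^ε - 1)² ≥ 0`.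
  have hlow : 1 - t ≤ Real.exp ε - 1 := by
    by_contra! h
    nlinarith [sq_nonneg (Real.exp ε - 1)]
  have hprod : (t - 1) * Real.log t ≤ ε * (Real.exp ε - 1) := by
    rcases le_total 1 t with h1 | h1
    · have := mul_le_mul (show t - 1 ≤ Real.exp ε - 1 by linarith) hlog_le
        (Real.log_nonneg h1) (by linarith)
      linarith
    · have := mul_le_mul hlow (show -Real.log t ≤ ε by linarith)
        (by linarith) (by linarith)
      linarith
  linarith

/-- Lemma III.2 of Dwork–Rothblum–Vadhan: if two probability measures `μ, ν`
on a common measurable space satisfy `μ(S) ≤ e^ε·ν(S)` and `ν(S) ≤ e^ε·μ(S)` for every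
measurable set `S` (i.e. the max divergences in both directions are at most `ε`), then
`D(μ‖ν) ≤ ε·(e^ε − 1)`. -/
theorem stmt_7 {α : Type*} [MeasurableSpace α] (μ ν : Measure α)
    [IsProbabilityMeasure μ] [IsProbabilityMeasure ν] (ε : ℝ) (hε : 0 ≤ ε)
    (h₁ : ∀ S : Set α, MeasurableSet S → μ S ≤ ENNReal.ofReal (Real.exp ε) * ν S)
    (h₂ : ∀ S : Set α, MeasurableSet S → ν S ≤ ENNReal.ofReal (Real.exp ε) * μ S) :
    klDiv μ ν ≤ ε * (Real.exp ε - 1) := by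
  have hac : μ ≪ ν := Measure.AbsolutelyContinuous.mk fun S hS h0 => by
    simpa [h0] using h₁ S hS
  have hup : ∀ᵐ x ∂ν, μ.rnDeriv ν x ≤ ENNReal.ofReal (Real.exp ε) := by
    refine ae_le_of_forall_setLIntegral_le_of_sigmaFinite (Measure.measurable_rnDeriv μ ν)
      fun S hS _ => ?_
    rw [setLIntegral_const]
    exact (Measure.setLIntegral_rnDeriv_le S).trans (h₁ S hS)
  have hlow : ∀ᵐ x ∂ν, 1 ≤ ENNReal.ofReal (Real.exp ε) * μ.rnDeriv ν x := by
    refine ae_le_of_forall_setLIntegral_le_of_sigmaFinite measurable_const fun S hS _ => ?_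
    rw [setLIntegral_const, one_mul, lintegral_const_mul _ (Measure.measurable_rnDeriv μ ν),
      Measure.setLIntegral_rnDeriv hac]
    exact h₂ S hS
  have hpt : ∀ᵐ x ∂ν, (μ.rnDeriv ν x).toReal * Real.log (μ.rnDeriv ν x).toReal ≤
      ((μ.rnDeriv ν x).toReal - 1) + ε * (Real.exp ε - 1) := by
    filter_upwards [hup, hlow] with x hx hx'
    have hfin : μ.rnDeriv ν x ≠ ⊤ := ne_top_of_le_ne_top ENNReal.ofReal_ne_top hx
    refine mul_log_le_of_bounds (ENNReal.toReal_le_of_le_ofReal (Real.exp_pos ε).le hx) ?_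
    have := ENNReal.toReal_mono (ENNReal.mul_ne_top ENNReal.ofReal_ne_top hfin) hx'
    rwa [ENNReal.toReal_mul, ENNReal.toReal_ofReal (Real.exp_pos ε).le, ENNReal.toReal_one] at this
  have hnonneg : 0 ≤ ε * (Real.exp ε - 1) :=
    mul_nonneg hε (sub_nonneg.2 (Real.one_le_exp hε))
  have hkl : klDiv μ ν =
      ∫ x, (μ.rnDeriv ν x).toReal * Real.log (μ.rnDeriv ν x).toReal ∂ν :=
    (integral_rnDeriv_mul_log hac).symm
  rw [hkl]
  by_cases hint : Integrable
      (fun x => (μ.rnDeriv ν x).toReal * Real.log (μ.rnDeriv ν x).toReal) ν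
  · have hf : Integrable (fun x => (μ.rnDeriv ν x).toReal) ν := Measure.integrable_toReal_rnDeriv
    have hf1 : Integrable (fun x => (μ.rnDeriv ν x).toReal - 1) ν := hf.sub (integrable_const 1)
    refine (integral_mono_ae hint (hf1.add (integrable_const _)) hpt).trans_eq ?_
    simp only [Pi.add_apply]
    rw [integral_add hf1 (integrable_const _), integral_sub hf (integrable_const 1),
      Measure.integral_toReal_rnDeriv hac]
    simp
  · -- The integrand is in fact bounded, but the junk value `0` of the integral already suffices.
    rwa [integral_undef hint]
end

section
/- Let α be a countable type, let P and Q be probability mass functions on α, and let ε* ≥ 0 and ρ ≥ 0. Suppose P({t : P(t) > e^{ε*}·Q(t)}) ≤ ρ and Q({t : Q(t) > e^{ε*}·P(t)}) ≤ ρ. Then for every set E ⊆ α: P(E) ≤ e^{ε*}·Q(E) + ρ and P(E) ≥ e^{−ε*}·(Q(E) − ρ). -/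
/-!
For any constant `c`, an event splits into the part where `P t > c * Q t`, whose `P`-mass is
controlled by hypothesis, and the part where `P t ≤ c * Q t`, on which the pointwise bound is
summed; see `toOuterMeasure_le_mul_add`. With `c = exp ε*` this is the upper bound. Exchanging
`P` and `Q` bounds `Q(E) - ρ` by `exp ε* * P(E)`, and multiplying by `exp (-ε*)` gives the
lower bound.
-/

open ENNReal

/-- Split `E` along the set where `P` exceeds `c * Q`: that set carries `P`-mass at most `r`, and
on the rest of `E` the inequality `P t ≤ c * Q t` holds pointwise, so it can be summed. -/
theorem toOuterMeasure_le_mul_add {α : Type*} (P Q : PMF α) (c r : ℝ≥0∞)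
    (h : P.toOuterMeasure {t | c * Q t < P t} ≤ r) (E : Set α) :
    P.toOuterMeasure E ≤ c * Q.toOuterMeasure E + r := by
  have hgood : P.toOuterMeasure (E \ {t | c * Q t < P t}) ≤ c * Q.toOuterMeasure E := by
    rw [PMF.toOuterMeasure_apply, PMF.toOuterMeasure_apply, ← ENNReal.tsum_mul_left]
    refine ENNReal.tsum_le_tsum fun t => ?_
    by_cases ht : t ∈ E \ {t | c * Q t < P t}
    · rw [Set.indicator_of_mem ht, Set.indicator_of_mem ht.1]
      exact not_lt.mp ht.2
    · rw [Set.indicator_of_notMem ht]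
      exact zero_le
  calc P.toOuterMeasure E
      ≤ P.toOuterMeasure ((E \ {t | c * Q t < P t}) ∪ {t | c * Q t < P t}) :=
        MeasureTheory.measure_mono (by simp)
    _ ≤ P.toOuterMeasure (E \ {t | c * Q t < P t}) + P.toOuterMeasure {t | c * Q t < P t} :=
        MeasureTheory.measure_union_le _ _
    _ ≤ c * Q.toOuterMeasure E + r := add_le_add hgood h


/-- Corollary 4.7 in abstract form: let `P, Q` be probability mass functions on
a countable type, `ε* ≥ 0`, `ρ ≥ 0`.  If the set of points where `P(t) > e^{ε*}·Q(t)` has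
`P`-probability at most `ρ`, and the set of points where `Q(t) > e^{ε*}·P(t)` has
`Q`-probability at most `ρ`, then for every event `E`:
`P(E) ≤ e^{ε*}·Q(E) + ρ` and `P(E) ≥ e^{−ε*}·(Q(E) − ρ)`. -/
theorem stmt_8 {α : Type*} [Countable α] (P Q : PMF α) (εstar ρ : ℝ)
    (hε : 0 ≤ εstar) (hρ : 0 ≤ ρ)
    (h₁ : P.toOuterMeasure {t | ENNReal.ofReal (Real.exp εstar) * Q t < P t}
            ≤ ENNReal.ofReal ρ)
    (h₂ : Q.toOuterMeasure {t | ENNReal.ofReal (Real.exp εstar) * P t < Q t}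
            ≤ ENNReal.ofReal ρ) :
    ∀ E : Set α,
      P.toOuterMeasure E
          ≤ ENNReal.ofReal (Real.exp εstar) * Q.toOuterMeasure E + ENNReal.ofReal ρ
      ∧ ENNReal.ofReal (Real.exp (-εstar)) * (Q.toOuterMeasure E - ENNReal.ofReal ρ)
          ≤ P.toOuterMeasure E := by
  intro E
  refine ⟨toOuterMeasure_le_mul_add P Q _ _ h₁ E, ?_⟩
  have hQ := tsub_le_iff_right.mpr (toOuterMeasure_le_mul_add Q P _ _ h₂ E)
  calc ENNReal.ofReal (Real.exp (-εstar)) * (Q.toOuterMeasure E - ENNReal.ofReal ρ)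
      ≤ ENNReal.ofReal (Real.exp (-εstar))
          * (ENNReal.ofReal (Real.exp εstar) * P.toOuterMeasure E) := by gcongr
    _ = P.toOuterMeasure E := by
        rw [← mul_assoc, ← ENNReal.ofReal_mul (Real.exp_pos _).le, ← Real.exp_add]
        simp
end

section
/- Let Y be a nonempty finite type, k ≥ 1 an integer, and let P, Q be probability mass functions on the function type Fin k → Y. For 0 ≤ i ≤ k and h : Fin i → Y, write P_i(h) = Σ_{t : Fin k → Y, t extends h} P(t) for the prefix probability (and similarly Q_i(h)). Let ε₀ ≥ 0 and assume that all prefix probabilities P_i(h) and Q_i(h) are strictly positive, and that for every i < k, every h : Fin i → Y, and every a ∈ Y the conditional probabilities p(a|h) = P_{i+1}(h⌢a)/P_i(h) and q(a|h) = Q_{i+1}(h⌢a)/Q_i(h) satisfy p(a|h) ≤ e^{ε₀}·q(a|h) and q(a|h) ≤ e^{ε₀}·p(a|h). Then for every ρ ∈ (0,1), setting ε* = √(2·k·ln(1/ρ))·ε₀ + k·ε₀·(e^{ε₀} − 1), we have P({t : ln(P(t)/Q(t)) > ε*}) ≤ ρ, and symmetrically Q({t : ln(Q(t)/P(t)) >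 ε*}) ≤ ρ. -/
/-!
Fix a Chernoff parameter `l ≥ 0`. In a single round the log-likelihood ratio `log (p / q)` takes
values in `[-ε₀, ε₀]` and has mean at most `ε₀ (e^ε₀ - 1)` under `p` (`kl_le`), so Hoeffding's
lemma bounds its exponential moment by `exp (l ε₀ (e^ε₀ - 1) + l² ε₀² / 2)` (`one_step`). The
log-likelihood ratio of a transcript is the sum of its conditional one-round ratios, and summing
out the last symbol of prefixes of growing length multiplies these bounds (`prefix_mgf`): this is
the proof of Azuma's inequality, written with finite sums. Markov's inequality with
`l = √(2 k log (1 / ρ)) / (k ε₀)` gives the tail bound `ρ` (`one_sided`); the hypotheses are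
symmetric in `P` and `Q`, so the bound holds in both directions.
-/

open ENNReal Classical

/-- The prefix probability `P_i(h) = Σ_{t extends h} P(t)`: the probability, under a PMF `P`
on `Fin k → Y`, that the transcript agrees with the prefix `h : Fin i → Y` on the first `i`
coordinates. -/
noncomputable def prefixProb {Y : Type*} [Fintype Y] {k : ℕ} (P : PMF (Fin k → Y))
    {i : ℕ} (hi : i ≤ k) (h : Fin i → Y) : ℝ≥0∞ :=
  ∑' t : Fin k → Y, if ∀ j : Fin i, t (Fin.castLE hi j) = h j then P t else 0

/-- The conditional probability `p(a|h) = P_{i+1}(h⌢a) / P_i(h)` of the next symbol `a` given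
the prefix `h`, where `h⌢a = Fin.snoc h a` extends `h` by `a` in coordinate `i`. -/
noncomputable def condProb {Y : Type*} [Fintype Y] {k : ℕ} (P : PMF (Fin k → Y))
    {i : ℕ} (hi : i < k) (h : Fin i → Y) (a : Y) : ℝ≥0∞ :=
  prefixProb P hi (Fin.snoc h a) / prefixProb P hi.le h

open MeasureTheory ProbabilityTheory in
/-- Hoeffding's lemma for a finitely supported random variable with values in `[-ε, ε]`. -/
lemma finite_hoeffding {Y : Type*} [Fintype Y] (p x : Y → ℝ) (hp : ∀ a, 0 ≤ p a)
    (hp1 : ∑ a, p a = 1) (ε l : ℝ) (hx : ∀ a, x a ∈ Set.Icc (-ε) ε) :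
    ∑ a, p a * Real.exp (l * x a)
      ≤ Real.exp (l * ∑ a, p a * x a) * Real.exp (l ^ 2 * ε ^ 2 / 2) := by
  let : MeasurableSpace Y := ⊤
  have hs : ∑ a, ENNReal.ofReal (p a) = 1 := by
    rw [← ENNReal.ofReal_sum_of_nonneg (fun a _ => hp a), hp1, ENNReal.ofReal_one]
  let μ := PMF.ofFintype (fun a => ENNReal.ofReal (p a)) hs
  have hint : ∀ f : Y → ℝ, ∫ a, f a ∂μ.toMeasure = ∑ a, p a * f a := by
    intro f
    rw [PMF.integral_eq_sum]
    refine Finset.sum_congr rfl fun a _ => ?_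
    simp [μ, PMF.ofFintype_apply, ENNReal.toReal_ofReal (hp a)]
  have h := (hasSubgaussianMGF_of_mem_Icc (μ := μ.toMeasure) (X := x) (a := -ε) (b := ε)
    (measurable_from_top.aemeasurable) (Filter.Eventually.of_forall hx)).mgf_le l
  unfold mgf at h
  rw [hint, hint] at h
  have hc : Real.exp (((‖ε - -ε‖₊ / 2) ^ 2 : NNReal) * l ^ 2 / 2)
      = Real.exp (l ^ 2 * ε ^ 2 / 2) := by
    congr 1
    push_cast
    rw [Real.norm_eq_abs, div_pow, sq_abs]
    ring
  rw [hc] at h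
  calc ∑ a, p a * Real.exp (l * x a)
      = Real.exp (l * ∑ a, p a * x a)
        * ∑ a, p a * Real.exp (l * (x a - ∑ a, p a * x a)) := by
        rw [Finset.mul_sum]
        refine Finset.sum_congr rfl fun a _ => ?_
        rw [mul_sub, Real.exp_sub]
        field_simp
    _ ≤ _ := by gcongr

lemma log_ratio_mem {u v ε : ℝ} (hu : 0 < u) (hv : 0 < v) (huv : u ≤ Real.exp ε * v)
    (hvu : v ≤ Real.exp ε * u) : Real.log (u / v) ∈ Set.Icc (-ε) ε := by
  constructor
  · rw [Real.le_log_iff_exp_le (by positivity), Real.exp_neg, le_div_iff₀ hv,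
      inv_mul_le_iff₀ (Real.exp_pos _)]
    exact hvu
  · rw [Real.log_le_iff_le_exp (by positivity), div_le_iff₀ hv]
    exact huv

/-- The relative entropy of two distributions with log-likelihood ratio at most `ε` is at most
`ε (e^ε - 1)`: it is at most the symmetrized divergence `∑ (p - q) log (p / q)`, whose terms are
at most `q (e^ε - 1) ε`. -/
lemma kl_le {Y : Type*} [Fintype Y] (p q : Y → ℝ) (hp : ∀ a, 0 < p a) (hq : ∀ a, 0 < q a)
    (hp1 : ∑ a, p a = 1) (hq1 : ∑ a, q a = 1) (ε : ℝ) (hε : 0 ≤ ε)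
    (hpq : ∀ a, p a ≤ Real.exp ε * q a) (hqp : ∀ a, q a ≤ Real.exp ε * p a) :
    ∑ a, p a * Real.log (p a / q a) ≤ ε * (Real.exp ε - 1) := by
  have h1 : ∑ a, q a * Real.log (p a / q a) ≤ 0 := by
    calc ∑ a, q a * Real.log (p a / q a) ≤ ∑ a, (p a - q a) := by
          refine Finset.sum_le_sum fun a _ => ?_
          have := Real.log_le_sub_one_of_pos (div_pos (hp a) (hq a))
          calc q a * Real.log (p a / q a) ≤ q a * (p a / q a - 1) :=
                mul_le_mul_of_nonneg_left this (hq a).le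
            _ = p a - q a := by have := (hq a).ne'; field_simp
      _ = 0 := by rw [Finset.sum_sub_distrib, hp1, hq1, sub_self]
  have h2 : ∑ a, (p a - q a) * Real.log (p a / q a) ≤ ε * (Real.exp ε - 1) := by
    calc ∑ a, (p a - q a) * Real.log (p a / q a)
        ≤ ∑ a, q a * (ε * (Real.exp ε - 1)) := by
          refine Finset.sum_le_sum fun a _ => ?_
          have hx := log_ratio_mem (hp a) (hq a) (hpq a) (hqp a)
          have hd : |p a - q a| ≤ q a * (Real.exp ε - 1) := by
            rw [abs_le]
            refine ⟨?_, by linarith [hpq a]⟩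
            -- if `p < q` then `q - p ≤ (e^ε - 1) p ≤ (e^ε - 1) q`
            rcases le_total (q a) (p a) with h | h
            · nlinarith [Real.one_le_exp hε, hq a]
            · nlinarith [Real.one_le_exp hε, hqp a]
          calc (p a - q a) * Real.log (p a / q a)
              ≤ |p a - q a| * |Real.log (p a / q a)| := by
                rw [← abs_mul]; exact le_abs_self _
            _ ≤ (q a * (Real.exp ε - 1)) * ε :=
                mul_le_mul hd (abs_le.2 hx) (abs_nonneg _) ((abs_nonneg _).trans hd)
            _ = _ := by ring
      _ = _ := by rw [← Finset.sum_mul, hq1, one_mul]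
  have h3 : ∑ a, (p a - q a) * Real.log (p a / q a)
      = ∑ a, p a * Real.log (p a / q a) - ∑ a, q a * Real.log (p a / q a) := by
    rw [← Finset.sum_sub_distrib]
    exact Finset.sum_congr rfl fun a _ => by ring
  linarith

/-- The exponential moment of the log-likelihood ratio of a single round. -/
lemma one_step {Y : Type*} [Fintype Y] (p q : Y → ℝ) (hp : ∀ a, 0 < p a) (hq : ∀ a, 0 < q a)
    (hp1 : ∑ a, p a = 1) (hq1 : ∑ a, q a = 1) (ε l : ℝ) (hε : 0 ≤ ε) (hl : 0 ≤ l)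
    (hpq : ∀ a, p a ≤ Real.exp ε * q a) (hqp : ∀ a, q a ≤ Real.exp ε * p a) :
    ∑ a, p a * Real.exp (l * Real.log (p a / q a))
      ≤ Real.exp (l * (ε * (Real.exp ε - 1)) + l ^ 2 * ε ^ 2 / 2) := by
  refine (finite_hoeffding p (fun a => Real.log (p a / q a)) (fun a => (hp a).le) hp1 ε l
    fun a => log_ratio_mem (hp a) (hq a) (hpq a) (hqp a)).trans ?_
  rw [Real.exp_add]
  gcongr
  exact kl_le p q hp hq hp1 hq1 ε hε hpq hqp

section prefixes

variable {Y : Type*} [Fintype Y] {k : ℕ}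

lemma prefixProb_ne_top (P : PMF (Fin k → Y)) {i : ℕ} (hi : i ≤ k) (h : Fin i → Y) :
    prefixProb P hi h ≠ ∞ := by
  refine ne_top_of_le_ne_top ENNReal.one_ne_top ?_
  rw [← P.tsum_coe]
  refine ENNReal.tsum_le_tsum fun t => ?_
  split_ifs <;> simp

lemma prefixProb_zero (P : PMF (Fin k → Y)) (h : Fin 0 → Y) :
    prefixProb P (Nat.zero_le k) h = 1 := by
  rw [← P.tsum_coe]
  simp [prefixProb]

lemma prefixProb_full (P : PMF (Fin k → Y)) (t : Fin k → Y) :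
    prefixProb P le_rfl t = P t := by
  unfold prefixProb
  rw [tsum_eq_single t]
  · simp
  · intro s hs
    rw [if_neg]
    exact fun h => hs (funext h)

lemma prefixProb_eq_sum_snoc (P : PMF (Fin k → Y)) {i : ℕ} (hi : i < k) (h : Fin i → Y) :
    ∑ a, prefixProb P hi (Fin.snoc h a : Fin (i + 1) → Y) = prefixProb P hi.le h := by
  simp only [prefixProb, tsum_fintype]
  rw [Finset.sum_comm]
  refine Finset.sum_congr rfl fun t _ => ?_
  -- among the one-symbol extensions of `h`, only the one by `t i` can be a prefix of `t`
  rw [Finset.sum_eq_single (t ⟨i, hi⟩)]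
  · congr 1
    simp only [Fin.forall_fin_succ', Fin.snoc_castSucc, Fin.snoc_last, eq_iff_iff]
    exact ⟨fun H => H.1, fun H => ⟨H, rfl⟩⟩
  · intro b _ hb
    rw [if_neg]
    intro H
    have := H (Fin.last i)
    rw [Fin.snoc_last] at this
    exact hb this.symm
  · simp

lemma sum_condProb (P : PMF (Fin k → Y)) {i : ℕ} (hi : i < k) (h : Fin i → Y)
    (hpos : 0 < prefixProb P hi.le h) : ∑ a, (condProb P hi h a).toReal = 1 := by
  have h2 : ∑ a, condProb P hi h a = 1 := by
    simp only [condProb, div_eq_mul_inv]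
    rw [← Finset.sum_mul, prefixProb_eq_sum_snoc P hi h]
    exact ENNReal.mul_inv_cancel hpos.ne' (prefixProb_ne_top P _ h)
  rw [← ENNReal.toReal_sum, h2, ENNReal.toReal_one]
  intro a _
  exact (ENNReal.div_lt_top (prefixProb_ne_top P _ _) hpos.ne').ne

lemma condProb_ne_top (P : PMF (Fin k → Y)) {i : ℕ} (hi : i < k) (h : Fin i → Y) (a : Y)
    (hpos : 0 < prefixProb P hi.le h) : condProb P hi h a ≠ ∞ :=
  (ENNReal.div_lt_top (prefixProb_ne_top P _ _) hpos.ne').ne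

lemma condProb_pos (P : PMF (Fin k → Y)) {i : ℕ} (hi : i < k) (h : Fin i → Y) (a : Y)
    (hpos : ∀ (i : ℕ) (hi : i ≤ k) (h : Fin i → Y), 0 < prefixProb P hi h) :
    0 < (condProb P hi h a).toReal :=
  ENNReal.toReal_pos (ENNReal.div_pos (hpos _ _ _).ne' (prefixProb_ne_top P _ _)).ne'
    (condProb_ne_top P hi h a (hpos _ _ _))

lemma prefixProb_snoc (P : PMF (Fin k → Y)) {i : ℕ} (hi : i < k) (h : Fin i → Y) (a : Y)
    (hpos : 0 < prefixProb P hi.le h) :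
    (prefixProb P hi (Fin.snoc h a : Fin (i + 1) → Y)).toReal
      = (prefixProb P hi.le h).toReal * (condProb P hi h a).toReal := by
  rw [← ENNReal.toReal_mul, condProb,
    ENNReal.mul_div_cancel hpos.ne' (prefixProb_ne_top P _ h)]

lemma condProb_toReal_le (P Q : PMF (Fin k → Y)) {i : ℕ} (hi : i < k) (h : Fin i → Y) (a : Y)
    {ε : ℝ} (hposQ : 0 < prefixProb Q hi.le h)
    (H : condProb P hi h a ≤ ENNReal.ofReal (Real.exp ε) * condProb Q hi h a) :
    (condProb P hi h a).toReal ≤ Real.exp ε * (condProb Q hi h a).toReal := by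
  have := ENNReal.toReal_mono
    (ENNReal.mul_ne_top ENNReal.ofReal_ne_top (condProb_ne_top Q hi h a hposQ)) H
  rwa [ENNReal.toReal_mul, ENNReal.toReal_ofReal (Real.exp_pos _).le] at this

/-- The supermartingale step, iterated: the exponential moment of the log-likelihood ratio of
prefixes of length `i` is at most the `i`-th power of the one-round bound. -/
lemma prefix_mgf (P Q : PMF (Fin k → Y)) (ε l : ℝ) (hε : 0 ≤ ε) (hl : 0 ≤ l)
    (hP : ∀ (i : ℕ) (hi : i ≤ k) (h : Fin i → Y), 0 < prefixProb P hi h)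
    (hQ : ∀ (i : ℕ) (hi : i ≤ k) (h : Fin i → Y), 0 < prefixProb Q hi h)
    (hPQ : ∀ (i : ℕ) (hi : i < k) (h : Fin i → Y) (a : Y),
      condProb P hi h a ≤ ENNReal.ofReal (Real.exp ε) * condProb Q hi h a)
    (hQP : ∀ (i : ℕ) (hi : i < k) (h : Fin i → Y) (a : Y),
      condProb Q hi h a ≤ ENNReal.ofReal (Real.exp ε) * condProb P hi h a)
    (i : ℕ) (hi : i ≤ k) :
    ∑ h : Fin i → Y, (prefixProb P hi h).toReal
        * Real.exp (l * Real.log ((prefixProb P hi h).toReal / (prefixProb Q hi h).toReal))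
      ≤ Real.exp (i * (l * (ε * (Real.exp ε - 1)) + l ^ 2 * ε ^ 2 / 2)) := by
  induction i with
  | zero => simp [prefixProb_zero]
  | succ i ih =>
    have hi' : i < k := hi
    have hPr : ∀ h : Fin i → Y, 0 < (prefixProb P hi'.le h).toReal := fun h =>
      ENNReal.toReal_pos (hP _ _ _).ne' (prefixProb_ne_top P _ _)
    have hQr : ∀ h : Fin i → Y, 0 < (prefixProb Q hi'.le h).toReal := fun h =>
      ENNReal.toReal_pos (hQ _ _ _).ne' (prefixProb_ne_top Q _ _)
    rw [← (Fin.snocEquiv (fun _ : Fin (i + 1) => Y)).sum_comp, Fintype.sum_prod_type_right]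
    have key : ∀ h : Fin i → Y,
        ∑ a, (prefixProb P hi (Fin.snoc h a : Fin (i + 1) → Y)).toReal
          * Real.exp (l * Real.log ((prefixProb P hi (Fin.snoc h a : Fin (i + 1) → Y)).toReal
            / (prefixProb Q hi (Fin.snoc h a : Fin (i + 1) → Y)).toReal))
        ≤ ((prefixProb P hi'.le h).toReal * Real.exp (l * Real.log
            ((prefixProb P hi'.le h).toReal / (prefixProb Q hi'.le h).toReal)))
          * Real.exp (l * (ε * (Real.exp ε - 1)) + l ^ 2 * ε ^ 2 / 2) := by
      intro h
      have hp := fun a => condProb_pos P hi' h a hP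
      have hq := fun a => condProb_pos Q hi' h a hQ
      have h1 := one_step (fun a => (condProb P hi' h a).toReal)
        (fun a => (condProb Q hi' h a).toReal) hp hq
        (sum_condProb P hi' h (hP _ _ _)) (sum_condProb Q hi' h (hQ _ _ _)) ε l hε hl
        (fun a => condProb_toReal_le P Q hi' h a (hQ _ _ _) (hPQ _ _ _ _))
        (fun a => condProb_toReal_le Q P hi' h a (hP _ _ _) (hQP _ _ _ _))
      refine le_trans (le_of_eq ?_) (mul_le_mul_of_nonneg_left h1
        (mul_nonneg (hPr h).le (Real.exp_pos _).le))
      rw [Finset.mul_sum]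
      refine Finset.sum_congr rfl fun a _ => ?_
      rw [prefixProb_snoc P hi' h a (hP _ _ _), prefixProb_snoc Q hi' h a (hQ _ _ _),
        mul_div_mul_comm, Real.log_mul (div_pos (hPr h) (hQr h)).ne'
          (div_pos (hp a) (hq a)).ne', mul_add, Real.exp_add]
      ring
    refine (Finset.sum_le_sum fun h _ => key h).trans ?_
    rw [← Finset.sum_mul]
    refine (mul_le_mul_of_nonneg_right (ih hi'.le) (Real.exp_pos _).le).trans (le_of_eq ?_)
    rw [← Real.exp_add]
    congr 1
    push_cast
    ring

/-- With `ε = 0` the likelihood ratio of every prefix is at most one. This case is separate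
because the optimal Chernoff parameter is proportional to `1 / ε`. -/
lemma prefix_le (P Q : PMF (Fin k → Y))
    (hP : ∀ (i : ℕ) (hi : i ≤ k) (h : Fin i → Y), 0 < prefixProb P hi h)
    (hQ : ∀ (i : ℕ) (hi : i ≤ k) (h : Fin i → Y), 0 < prefixProb Q hi h)
    (hPQ : ∀ (i : ℕ) (hi : i < k) (h : Fin i → Y) (a : Y),
      condProb P hi h a ≤ ENNReal.ofReal (Real.exp 0) * condProb Q hi h a)
    (i : ℕ) (hi : i ≤ k) (h : Fin i → Y) :
    (prefixProb P hi h).toReal ≤ (prefixProb Q hi h).toReal := by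
  induction i with
  | zero => simp [prefixProb_zero]
  | succ i ih =>
    have hi' : i < k := hi
    rw [← Fin.snoc_init_self h]
    rw [prefixProb_snoc P hi' _ _ (hP _ _ _), prefixProb_snoc Q hi' _ _ (hQ _ _ _)]
    have := condProb_toReal_le P Q hi' (Fin.init h) (h (Fin.last i)) (hQ _ _ _) (hPQ _ _ _ _)
    rw [Real.exp_zero, one_mul] at this
    exact mul_le_mul (ih hi'.le _) this ENNReal.toReal_nonneg ENNReal.toReal_nonneg

end prefixes

/-- The tail bound in one direction, by Markov's inequality applied to `exp (l * log (P / Q))`. -/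
lemma one_sided {Y : Type*} [Fintype Y] {k : ℕ} (hk : 1 ≤ k)
    (P Q : PMF (Fin k → Y)) (ε : ℝ) (hε : 0 ≤ ε)
    (hP : ∀ (i : ℕ) (hi : i ≤ k) (h : Fin i → Y), 0 < prefixProb P hi h)
    (hQ : ∀ (i : ℕ) (hi : i ≤ k) (h : Fin i → Y), 0 < prefixProb Q hi h)
    (hPQ : ∀ (i : ℕ) (hi : i < k) (h : Fin i → Y) (a : Y),
      condProb P hi h a ≤ ENNReal.ofReal (Real.exp ε) * condProb Q hi h a)
    (hQP : ∀ (i : ℕ) (hi : i < k) (h : Fin i → Y) (a : Y),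
      condProb Q hi h a ≤ ENNReal.ofReal (Real.exp ε) * condProb P hi h a)
    (ρ : ℝ) (hρ : ρ ∈ Set.Ioo (0 : ℝ) 1) :
    P.toOuterMeasure {t | Real.sqrt (2 * k * Real.log (1 / ρ)) * ε
            + k * ε * (Real.exp ε - 1)
          < Real.log ((P t).toReal / (Q t).toReal)} ≤ ENNReal.ofReal ρ := by
  set L := Real.log (1 / ρ) with hL
  have hL0 : 0 ≤ L := Real.log_nonneg (by rw [le_div_iff₀ hρ.1]; linarith [hρ.2])
  have hkr : (0 : ℝ) < k := by exact_mod_cast hk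
  set s := Real.sqrt (2 * k * L) with hs
  have hs2 : s ^ 2 = 2 * k * L := Real.sq_sqrt (by positivity)
  have hs0 : 0 ≤ s := Real.sqrt_nonneg _
  set E := s * ε + k * ε * (Real.exp ε - 1) with hE
  rcases hε.eq_or_lt with h0 | hεpos
  · subst h0
    convert zero_le (a := ENNReal.ofReal ρ)
    rw [PMF.toOuterMeasure_apply_eq_zero_iff, Set.disjoint_left]
    rintro t - ht
    have h1 := prefix_le P Q hP hQ hPQ k le_rfl t
    rw [prefixProb_full, prefixProb_full] at h1
    have h2 : Real.log ((P t).toReal / (Q t).toReal) ≤ 0 :=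
      Real.log_nonpos (by positivity) (div_le_one_of_le₀ h1 ENNReal.toReal_nonneg)
    simp only [Set.mem_ofPred_eq, hE] at ht
    simp at ht
    linarith
  · -- the minimizer of `k l² ε² / 2 - l s ε`
    set l := s / (k * ε) with hl
    have hl0 : 0 ≤ l := by positivity
    have h1 := prefix_mgf P Q ε l hε hl0 hP hQ hPQ hQP k le_rfl
    simp only [prefixProb_full] at h1
    rw [PMF.toOuterMeasure_apply, tsum_fintype]
    have h2 : ∀ t, ({t | E < Real.log ((P t).toReal / (Q t).toReal)}.indicator P t)
        ≤ ENNReal.ofReal ((P t).toReal * Real.exp (l * Real.log ((P t).toReal / (Q t).toReal))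
          * Real.exp (-(l * E))) := by
      intro t
      by_cases ht : E < Real.log ((P t).toReal / (Q t).toReal)
      · rw [Set.indicator_of_mem (by exact ht)]
        rw [← ENNReal.ofReal_toReal (P.apply_ne_top t)]
        apply ENNReal.ofReal_le_ofReal
        rw [ENNReal.toReal_ofReal ENNReal.toReal_nonneg, mul_assoc, ← Real.exp_add]
        refine le_mul_of_one_le_right ENNReal.toReal_nonneg (Real.one_le_exp ?_)
        have := mul_le_mul_of_nonneg_left ht.le hl0
        linarith
      · rw [Set.indicator_of_notMem (by exact ht)]
        exact zero_le
    refine (Finset.sum_le_sum fun t _ => h2 t).trans ?_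
    rw [← ENNReal.ofReal_sum_of_nonneg (fun t _ => by positivity), ← Finset.sum_mul]
    apply ENNReal.ofReal_le_ofReal
    refine (mul_le_mul_of_nonneg_right h1 (Real.exp_pos _).le).trans (le_of_eq ?_)
    rw [← Real.exp_add]
    have hρe : ρ = Real.exp (-L) := by
      rw [hL, one_div, Real.log_inv, neg_neg, Real.exp_log hρ.1]
    rw [hρe]
    congr 1
    have hlε : l * ε = s / k := by rw [hl]; field_simp
    have e1 : (k : ℝ) * (l * (ε * (Real.exp ε - 1)) + l ^ 2 * ε ^ 2 / 2) + -(l * E)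
        = k * (l * ε) ^ 2 / 2 - (l * ε) * s := by rw [hE]; ring
    rw [e1, hlε]
    have : (k : ℝ) * (s / k) ^ 2 / 2 - s / k * s = - (s ^ 2 / (2 * k)) := by
      field_simp; ring
    rw [this, hs2]
    field_simp

/-- Theorem 4.6, the advanced-composition bound of Dwork–Rothblum–Vadhan adapted
to the hybrid and oracle mechanisms: let `P, Q` be PMFs on transcripts `Fin k → Y` (`Y` a
nonempty finite type, `k ≥ 1`) whose prefix probabilities are all strictly positive and whose
round-by-round conditional probabilities have log-likelihood ratio at most `ε₀` in both
directions given any common history.  Then for every `ρ ∈ (0,1)`, with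
`ε* = √(2·k·ln(1/ρ))·ε₀ + k·ε₀·(e^{ε₀} − 1)`, the transcript log-likelihood ratio exceeds
`ε*` with probability at most `ρ`, under `P` and symmetrically under `Q`. -/
theorem stmt_9 {Y : Type*} [Fintype Y] [Nonempty Y] (k : ℕ) (hk : 1 ≤ k)
    (P Q : PMF (Fin k → Y)) (ε₀ : ℝ) (hε₀ : 0 ≤ ε₀)
    (hpos : ∀ (i : ℕ) (hi : i ≤ k) (h : Fin i → Y),
      0 < prefixProb P hi h ∧ 0 < prefixProb Q hi h)
    (hratio : ∀ (i : ℕ) (hi : i < k) (h : Fin i → Y) (a : Y),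
      condProb P hi h a ≤ ENNReal.ofReal (Real.exp ε₀) * condProb Q hi h a
      ∧ condProb Q hi h a ≤ ENNReal.ofReal (Real.exp ε₀) * condProb P hi h a) :
    ∀ ρ : ℝ, ρ ∈ Set.Ioo (0 : ℝ) 1 →
      P.toOuterMeasure {t | Real.sqrt (2 * k * Real.log (1 / ρ)) * ε₀
            + k * ε₀ * (Real.exp ε₀ - 1)
          < Real.log ((P t).toReal / (Q t).toReal)} ≤ ENNReal.ofReal ρ
      ∧ Q.toOuterMeasure {t | Real.sqrt (2 * k * Real.log (1 / ρ)) * ε₀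
            + k * ε₀ * (Real.exp ε₀ - 1)
          < Real.log ((Q t).toReal / (P t).toReal)} ≤ ENNReal.ofReal ρ := by
  exact fun ρ hρ =>
    ⟨one_sided hk P Q ε₀ hε₀ (fun i hi h => (hpos i hi h).1) (fun i hi h => (hpos i hi h).2)
      (fun i hi h a => (hratio i hi h a).1) (fun i hi h a => (hratio i hi h a).2) ρ hρ,
    one_sided hk Q P ε₀ hε₀ (fun i hi h => (hpos i hi h).2) (fun i hi h => (hpos i hi h).1)
      (fun i hi h a => (hratio i hi h a).2) (fun i hi h a => (hratio i hi h a).1) ρ hρ⟩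
end
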